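/- Let $n \ge 2$, let $d_2, \ldots, d_n \in \mathbb{R}^m$, let $\Delta_2, \ldots, \Delta_n > 0$, suppose $B = \sum_{j=2}^n \Delta_j^{-1} d_j d_j^T$ is invertible, and let $M$ be an $m \times m$ real matrix. Define $\omega_j^* = \Delta_j^{-1} M B^{-1} d_j$. Then for every family $\omega_2, \ldots, \omega_n \in \mathbb{R}^m$ satisfying the constraint $\sum_{j=2}^n \omega_j d_j^T = M$ and for every vector $v \in \mathbb{R}^m$, one has $v^T \Big( \sum_{j=2}^n \Delta_j \, \omega_j^* (\omega_j^*)^T \Big) v \le v^T \Big( \sum_{j=2}^n \Delta_j \, \omega_j \omega_j^T \Big) v$. -/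

import Mathlib

/-!
Fix `v` and put `aⱼ = v ⬝ᵥ ωⱼ`, `sⱼ = v ⬝ᵥ ωⱼ*`, so that the claim reads `∑ Δⱼ sⱼ² ≤ ∑ Δⱼ aⱼ²`.
With `y = vᵀ M B⁻¹` one has `Δⱼ sⱼ = y ⬝ᵥ dⱼ`, hence `∑ Δⱼ aⱼ sⱼ = vᵀ (∑ ωⱼ dⱼᵀ) y = vᵀ M y` takes
the same value for every admissible `ω`. The weights `ω*` are themselves admissible, since
`∑ ωⱼ* dⱼᵀ = M B⁻¹ B = M`; therefore `∑ Δⱼ aⱼ sⱼ = ∑ Δⱼ sⱼ²`, and expanding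
`0 ≤ ∑ Δⱼ (aⱼ - sⱼ)²` gives the claim (Pythagoras in the `Δ`-weighted inner product).
-/

open Matrix

theorem dotProduct_sum_smul_vecMulVec_mulVec {m : ℕ} (S : Finset ℕ) (c : ℕ → ℝ)
    (a b : ℕ → Fin m → ℝ) (v w : Fin m → ℝ) :
    v ⬝ᵥ (∑ j ∈ S, c j • vecMulVec (a j) (b j)).mulVec w
      = ∑ j ∈ S, c j * ((v ⬝ᵥ a j) * (w ⬝ᵥ b j)) := by
  rw [sum_mulVec, dotProduct_sum]
  refine Finset.sum_congr rfl fun j _ => ?_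
  rw [smul_mulVec, dotProduct_smul, vecMulVec_mulVec, op_smul_eq_smul, dotProduct_smul,
    smul_eq_mul, smul_eq_mul, dotProduct_comm (b j) w, mul_comm (w ⬝ᵥ b j)]

/-- Loewner optimality of the optimal weights: for any weights `ω` satisfying the
unbiasedness constraint `∑ⱼ ωⱼ dⱼᵀ = M` and any vector `v`,
`vᵀ (∑ⱼ Δⱼ ωⱼ* ωⱼ*ᵀ) v ≤ vᵀ (∑ⱼ Δⱼ ωⱼ ωⱼᵀ) v`, where `ωⱼ* = Δⱼ⁻¹ M B⁻¹ dⱼ`. -/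
theorem optimal_weights_loewner_min {m : ℕ} (n : ℕ) (hn : 2 ≤ n)
    (d : ℕ → Fin m → ℝ) (Δ : ℕ → ℝ) (hΔ : ∀ j ∈ Finset.Icc 2 n, 0 < Δ j)
    (B : Matrix (Fin m) (Fin m) ℝ)
    (hB : B = ∑ j ∈ Finset.Icc 2 n, (Δ j)⁻¹ • vecMulVec (d j) (d j))
    (hBinv : IsUnit B.det)
    (M : Matrix (Fin m) (Fin m) ℝ)
    (ωs : ℕ → Fin m → ℝ)
    (hωs : ∀ j, ωs j = (Δ j)⁻¹ • (M * B⁻¹).mulVec (d j)) :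
    ∀ ω : ℕ → Fin m → ℝ,
      (∑ j ∈ Finset.Icc 2 n, vecMulVec (ω j) (d j)) = M →
      ∀ v : Fin m → ℝ,
        v ⬝ᵥ (∑ j ∈ Finset.Icc 2 n, Δ j • vecMulVec (ωs j) (ωs j)).mulVec v ≤
        v ⬝ᵥ (∑ j ∈ Finset.Icc 2 n, Δ j • vecMulVec (ω j) (ω j)).mulVec v := by
  intro ω hω v
  set y : Fin m → ℝ := v ᵥ* (M * B⁻¹)
  have hs : ∀ j, v ⬝ᵥ ωs j = (Δ j)⁻¹ * (y ⬝ᵥ d j) := fun j => by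
    rw [hωs, dotProduct_smul, smul_eq_mul, dotProduct_mulVec]
  have hadm : (∑ j ∈ Finset.Icc 2 n, vecMulVec (ωs j) (d j)) = M := by
    calc _ = M * B⁻¹ * B := by
          conv_rhs => arg 2; rw [hB]
          rw [Finset.mul_sum]
          refine Finset.sum_congr rfl fun j _ => ?_
          rw [hωs, smul_vecMulVec, mul_smul_comm, mul_vecMulVec]
      _ = M := by rw [Matrix.mul_assoc, nonsing_inv_mul B hBinv, Matrix.mul_one]
  -- The cross term `∑ Δⱼ (v ⬝ᵥ uⱼ) sⱼ` does not depend on the choice of admissible weights `u`.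
  have hcross : ∀ u : ℕ → Fin m → ℝ, (∑ j ∈ Finset.Icc 2 n, vecMulVec (u j) (d j)) = M →
      ∑ j ∈ Finset.Icc 2 n, Δ j * ((v ⬝ᵥ u j) * (v ⬝ᵥ ωs j)) = v ⬝ᵥ M.mulVec y := by
    intro u hu
    have h := dotProduct_sum_smul_vecMulVec_mulVec (Finset.Icc 2 n) (fun _ => 1) u d v y
    simp only [one_smul, one_mul] at h
    rw [← hu, h]
    refine Finset.sum_congr rfl fun j hj => ?_
    have := (hΔ j hj).ne'
    rw [hs]
    field_simp
  rw [dotProduct_sum_smul_vecMulVec_mulVec, dotProduct_sum_smul_vecMulVec_mulVec]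
  have h1 := hcross ω hω
  have h2 := hcross ωs hadm
  have h3 : 0 ≤ ∑ j ∈ Finset.Icc 2 n, Δ j * (v ⬝ᵥ ω j - v ⬝ᵥ ωs j) ^ 2 :=
    Finset.sum_nonneg fun j hj => mul_nonneg (hΔ j hj).le (sq_nonneg _)
  have h4 : ∑ j ∈ Finset.Icc 2 n, Δ j * (v ⬝ᵥ ω j - v ⬝ᵥ ωs j) ^ 2
      = ∑ j ∈ Finset.Icc 2 n, Δ j * ((v ⬝ᵥ ω j) * (v ⬝ᵥ ω j))
        - 2 * ∑ j ∈ Finset.Icc 2 n, Δ j * ((v ⬝ᵥ ω j) * (v ⬝ᵥ ωs j))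
        + ∑ j ∈ Finset.Icc 2 n, Δ j * ((v ⬝ᵥ ωs j) * (v ⬝ᵥ ωs j)) := by
    rw [Finset.mul_sum, ← Finset.sum_sub_distrib, ← Finset.sum_add_distrib]
    exact Finset.sum_congr rfl fun j _ => by ring
  linarith
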